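/- arXiv:2505.04796 — 2 statements merged into one kernel-verified Lean document; each statement's English description precedes it below -/
import Mathlib

section
/- Let n ≥ 2 and τ > 0. In ℝⁿ, let F = {x : x₀ = 0}, c = τ·e₀ (so the closed ball B = closedBall(c, τ) is tangent to F), and π(x) = x − x₀·e₀. Then volume({x ∈ B : π(x) ∈ B}) = 0; equivalently, the detection probability volume({x ∈ B : π(x) ∉ B}) / volume(B) equals 1. That is, when the expectability threshold τ equals the distance δ of the ball's center to the fair hyperplane, the auditor detects a manipulating platform with probability one. -/
open MeasureTheory Real

/-!
In a strictly convex space, a closed ball whose radius does not exceed the distance from its center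
to a convex set meets that set in at most one point: the midpoint of two common points would be
strictly closer to the center. The undetected points are mapped into this intersection, so they lie
in a single fibre of a nonconstant affine map, a proper affine subspace and hence a null set.
-/

open Metric Set

theorem subsingleton_inter_closedBall_of_le_infDist {E : Type*} [NormedAddCommGroup E]
    [NormedSpace ℝ E] [StrictConvexSpace ℝ E] {s : Set E} {c : E} {r : ℝ} (hs : Convex ℝ s)
    (hr : r ≤ infDist c s) : (s ∩ closedBall c r).Subsingleton := by
  rintro x ⟨hxs, hxr⟩ y ⟨hys, hyr⟩
  by_contra hxy
  have hmem : (2⁻¹ : ℝ) • x + (2⁻¹ : ℝ) • y ∈ s :=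
    hs hxs hys (by norm_num) (by norm_num) (by norm_num)
  have hball : (2⁻¹ : ℝ) • x + (2⁻¹ : ℝ) • y ∈ ball c r :=
    combo_mem_ball_of_ne hxr hyr hxy (by norm_num) (by norm_num) (by norm_num)
  exact (hr.trans (infDist_le_dist_of_mem hmem)).not_gt (mem_ball'.1 hball)

theorem addHaar_preimage_eq_zero_of_subsingleton {E F : Type*} [NormedAddCommGroup E]
    [NormedSpace ℝ E] [FiniteDimensional ℝ E] [MeasurableSpace E] [BorelSpace E] [AddCommGroup F]
    [Module ℝ F] (μ : Measure E) [μ.IsAddHaarMeasure] {f : E →ᵃ[ℝ] F} (hf : f.linear ≠ 0)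
    {s : Set F} (hs : s.Subsingleton) : μ (f ⁻¹' s) = 0 := by
  have hfibre : ((affineSpan ℝ s).comap f : Set E) = f ⁻¹' s := by
    rw [AffineSubspace.coe_comap]
    obtain rfl | ⟨y, rfl⟩ := hs.eq_empty_or_singleton <;> simp
  rw [← hfibre]
  refine Measure.addHaar_affineSubspace μ _ fun htop ↦ hf (LinearMap.ext fun v ↦ ?_)
  have hmem (x : E) : f x ∈ s := by
    rw [← mem_preimage, ← hfibre, htop]
    exact AffineSubspace.mem_top ℝ E x
  calc
    f.linear v = f v - f 0 := by simpa using f.linearMap_vsub v 0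
    _ = 0 := sub_eq_zero.2 (hs (hmem v) (hmem 0))

theorem infDist_eq_norm_of_mem_orthogonal {E : Type*} [NormedAddCommGroup E]
    [InnerProductSpace ℝ E] {K : Submodule ℝ E} {c : E} (hc : c ∈ Kᗮ) :
    infDist c K = ‖c‖ := by
  apply le_antisymm
  · simpa using infDist_le_dist_of_mem (x := c) K.zero_mem
  · refine (le_infDist ⟨0, K.zero_mem⟩).2 fun y hy ↦ ?_
    have hpythagoras : ‖c - y‖ * ‖c - y‖ = ‖c‖ * ‖c‖ + ‖y‖ * ‖y‖ :=
      norm_sub_sq_eq_norm_sq_add_norm_sq_real (K.inner_left_of_mem_orthogonal hy hc)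
    rw [dist_eq_norm]
    nlinarith [norm_nonneg c, norm_nonneg (c - y), mul_self_nonneg ‖y‖]

theorem starProjection_orthogonal_span_single {𝕜 ι : Type*} [RCLike 𝕜] [Fintype ι] [DecidableEq ι]
    (i : ι) (x : EuclideanSpace 𝕜 ι) :
    (𝕜 ∙ EuclideanSpace.single i (1 : 𝕜))ᗮ.starProjection x =
      x - x i • EuclideanSpace.single i (1 : 𝕜) := by
  rw [Submodule.starProjection_orthogonal_val,
    Submodule.starProjection_unit_singleton 𝕜 (by simp), EuclideanSpace.inner_single_left,
    map_one, one_mul]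

theorem detection_rate_one_of_tangent_general {E : Type*} [NormedAddCommGroup E] [NormedSpace ℝ E]
    [StrictConvexSpace ℝ E] [FiniteDimensional ℝ E] [MeasurableSpace E] [BorelSpace E]
    (μ : Measure E) [μ.IsAddHaarMeasure] {f : E →ᵃ[ℝ] E} (hf : f.linear ≠ 0) {c : E} {r : ℝ}
    (hr : 0 < r) (hrc : r ≤ infDist c (range f)) :
    μ {x ∈ closedBall c r | f x ∈ closedBall c r} = 0 ∧
      μ {x ∈ closedBall c r | f x ∉ closedBall c r} / μ (closedBall c r) = 1 := by
  have hrange : Convex ℝ (range f) := by simpa using convex_univ.affine_image f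
  have hnull : μ (closedBall c r ∩ f ⁻¹' closedBall c r) = 0 := by
    refine measure_inter_null_of_null_right _ ?_
    rw [← preimage_range_inter]
    exact addHaar_preimage_eq_zero_of_subsingleton μ hf
      (subsingleton_inter_closedBall_of_le_infDist hrange hrc)
  refine ⟨hnull, ?_⟩
  change μ (closedBall c r \ f ⁻¹' closedBall c r) / μ (closedBall c r) = 1
  rw [measure_sdiff_null' hnull]
  exact ENNReal.div_self (measure_closedBall_pos μ c hr).ne' measure_closedBall_lt_top.ne

/-- Tangent case `τ = δ`: when `B = closedBall(τ·e₀, τ)` is tangent to the fair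
hyperplane `{x : x₀ = 0}`, the undetected region has measure zero and the detection
probability is one. -/
theorem detection_rate_one_of_tangent {n : ℕ} (hn : 2 ≤ n) (τ : ℝ) (hτ : 0 < τ) :
    let e₀ : EuclideanSpace ℝ (Fin n) := EuclideanSpace.single ⟨0, Nat.lt_of_lt_of_le Nat.zero_lt_two hn⟩ 1
    let c : EuclideanSpace ℝ (Fin n) := τ • e₀
    let B : Set (EuclideanSpace ℝ (Fin n)) := Metric.closedBall c τ
    let proj : EuclideanSpace ℝ (Fin n) → EuclideanSpace ℝ (Fin n) :=
      fun x => x - x ⟨0, Nat.lt_of_lt_of_le Nat.zero_lt_two hn⟩ • e₀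
    volume {x ∈ B | proj x ∈ B} = 0 ∧
    volume {x ∈ B | proj x ∉ B} / volume B = 1 := by
  intro e₀ c B proj
  let K : Submodule ℝ (EuclideanSpace ℝ (Fin n)) := (ℝ ∙ e₀)ᗮ
  have hproj : ⇑K.starProjection = proj := funext (starProjection_orthogonal_span_single _)
  have hlinear : K.starProjection.toLinearMap ≠ 0 := by
    intro hzero
    have hfixed : proj (EuclideanSpace.single ⟨1, hn⟩ 1) = EuclideanSpace.single ⟨1, hn⟩ 1 := by
      simp [proj]
    simpa [hproj, hfixed] using LinearMap.congr_fun hzero (EuclideanSpace.single ⟨1, hn⟩ 1)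
  have hdist : infDist c K = τ := by
    have hc : c ∈ Kᗮ := Submodule.le_orthogonal_orthogonal _
      (Submodule.smul_mem _ _ (Submodule.mem_span_singleton_self e₀))
    simp [infDist_eq_norm_of_mem_orthogonal hc, c, e₀, norm_smul, hτ.le]
  have hrange : range K.starProjection = K := congrArg SetLike.coe K.range_starProjection
  rw [← hproj]
  exact detection_rate_one_of_tangent_general volume
    (f := K.starProjection.toLinearMap.toAffineMap) hlinear hτ (hrange ▸ hdist.ge)
end

section
/- Let n ≥ 1, τ > 0 and 0 ≤ δ ≤ τ. The Lebesgue volume of the spherical cap {x ∈ ℝⁿ : ‖x‖ ≤ τ and x₀ ≥ δ} equals ( π^{(n−1)/2} · τⁿ / Γ((n+1)/2) ) · ∫₀^{arccos(δ/τ)} sinⁿθ dθ. -/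
/-!
Write `x = t • e + y` with `y ⟂ e`, where `e` is the axis of the cap. The slice of the cap at
height `t ∈ [δ, τ]` is a ball of radius `√(τ² - t²)` in the hyperplane `eᗮ`, so by Cavalieri's
principle the volume is a constant multiple of `∫ t in δ..τ, √(τ² - t²) ^ (n - 1)`. The
substitution `t = τ cos θ` turns this into an integral of `sin θ ^ n`.
-/

open MeasureTheory Real

open Metric Module Set

open scoped RealInnerProductSpace

section SineIntegral

lemma sqrt_sq_sub_mul_cos_sq {τ θ : ℝ} (hτ : 0 ≤ τ) (hθ : 0 ≤ sin θ) :
    √(τ ^ 2 - (τ * cos θ) ^ 2) = τ * sin θ := by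
  rw [← sqrt_sq (mul_nonneg hτ hθ)]
  congr 1
  linear_combination -τ ^ 2 * sin_sq_add_cos_sq θ

lemma integral_sqrt_sq_sub_sq_pow (m : ℕ) {δ τ : ℝ} (hτ : 0 < τ) (hδ : -τ ≤ δ) (hδτ : δ ≤ τ) :
    ∫ t in δ..τ, √(τ ^ 2 - t ^ 2) ^ m =
      τ ^ (m + 1) * ∫ θ in (0 : ℝ)..arccos (δ / τ), sin θ ^ (m + 1) := by
  have mul_cos_arccos : τ * cos (arccos (δ / τ)) = δ := by
    rw [cos_arccos ((le_div_iff₀ hτ).2 (by linarith)) ((div_le_one hτ).2 hδτ),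
      mul_div_cancel₀ _ hτ.ne']
  have substitution :
      ∫ θ in (0 : ℝ)..arccos (δ / τ), √(τ ^ 2 - (τ * cos θ) ^ 2) ^ m * (τ * -sin θ) =
        ∫ t in τ..δ, √(τ ^ 2 - t ^ 2) ^ m := by
    simpa [mul_cos_arccos] using intervalIntegral.integral_comp_mul_deriv
      (a := 0) (b := arccos (δ / τ)) (f := fun θ ↦ τ * cos θ) (f' := fun θ ↦ τ * -sin θ)
      (g := fun t ↦ √(τ ^ 2 - t ^ 2) ^ m)
      (fun θ _ ↦ (hasDerivAt_cos θ).const_mul τ) (by fun_prop) (by fun_prop)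
  rw [intervalIntegral.integral_symm, ← substitution, ← intervalIntegral.integral_neg,
    ← intervalIntegral.integral_const_mul]
  refine intervalIntegral.integral_congr fun θ hθ ↦ ?_
  rw [uIcc_of_le (arccos_nonneg _)] at hθ
  have sin_nonneg : 0 ≤ sin θ :=
    sin_nonneg_of_nonneg_of_le_pi hθ.1 (hθ.2.trans (arccos_le_pi _))
  simp only [sqrt_sq_sub_mul_cos_sq hτ.le sin_nonneg]
  ring

end SineIntegral

section InnerProductSpace

variable {E : Type*} [NormedAddCommGroup E] [InnerProductSpace ℝ E]

/-- The cap of height `δ` with axis `e` (meant to be a unit vector) of the closed ball of radius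
`τ` centred at the origin. -/
def sphericalCap (e : E) (δ τ : ℝ) : Set E :=
  {x | ‖x‖ ≤ τ ∧ δ ≤ ⟪e, x⟫}

lemma isClosed_sphericalCap (e : E) (δ τ : ℝ) : IsClosed (sphericalCap e δ τ) :=
  (isClosed_le (by fun_prop) (by fun_prop)).and (isClosed_le (by fun_prop) (by fun_prop))

section UnitVector

variable {e : E} (he : ‖e‖ = 1)
include he

lemma inner_smul_add_orthogonal (t : ℝ) (y : (ℝ ∙ e)ᗮ) : ⟪e, t • e + y⟫ = t := by
  simp [inner_add_right, real_inner_smul_right, he,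
    Submodule.mem_orthogonal_singleton_iff_inner_right.1 y.2]

lemma norm_smul_add_orthogonal_sq (t : ℝ) (y : (ℝ ∙ e)ᗮ) :
    ‖t • e + (y : E)‖ ^ 2 = t ^ 2 + ‖y‖ ^ 2 := by
  have orthogonal : ⟪t • e, (y : E)⟫ = 0 := by
    simp [real_inner_smul_left, Submodule.mem_orthogonal_singleton_iff_inner_right.1 y.2]
  simp [norm_add_sq_real, orthogonal, norm_smul, he]

lemma smul_add_orthogonal_mem_sphericalCap_iff {δ τ : ℝ} (hτ : 0 ≤ τ) (hδ : -τ ≤ δ)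
    (t : ℝ) (y : (ℝ ∙ e)ᗮ) :
    t • e + (y : E) ∈ sphericalCap e δ τ ↔ t ∈ Icc δ τ ∧ ‖y‖ ≤ √(τ ^ 2 - t ^ 2) := by
  rw [sphericalCap, mem_ofPred_eq, inner_smul_add_orthogonal he,
    ← sq_le_sq₀ (norm_nonneg _) hτ, norm_smul_add_orthogonal_sq he]
  constructor
  · rintro ⟨hnorm, hδt⟩
    exact ⟨⟨hδt, le_of_sq_le_sq (by nlinarith [sq_nonneg ‖y‖]) hτ⟩,
      le_sqrt_of_sq_le (by linarith)⟩
  · rintro ⟨⟨hδt, htτ⟩, hy⟩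
    have sq_le : t ^ 2 ≤ τ ^ 2 := sq_le_sq' (hδ.trans hδt) htτ
    rw [le_sqrt (norm_nonneg _) (sub_nonneg.2 sq_le)] at hy
    exact ⟨by linarith, hδt⟩

variable [FiniteDimensional ℝ E] [MeasurableSpace E] [BorelSpace E]

lemma measurePreserving_smul_add_orthogonal :
    MeasurePreserving (fun p : ℝ × (ℝ ∙ e)ᗮ ↦ p.1 • e + (p.2 : E)) := by
  have axis := (LinearIsometryEquiv.toSpanUnitSingleton e he).measurePreserving.prod
    (MeasurePreserving.id (volume : Measure (ℝ ∙ e)ᗮ))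
  convert! (ℝ ∙ e).orthogonalDecomposition.symm.measurePreserving.comp
    ((WithLp.volume_preserving_toLp (ℝ ∙ e) (ℝ ∙ e)ᗮ).comp axis) using 2

lemma volume_eq_lintegral_volume_orthogonal_slice {s : Set E} (hs : MeasurableSet s) :
    volume s = ∫⁻ t : ℝ, volume {y : (ℝ ∙ e)ᗮ | t • e + (y : E) ∈ s} := by
  have slicing := measurePreserving_smul_add_orthogonal he
  rw [← slicing.measure_preimage hs.nullMeasurableSet, Measure.volume_eq_prod,
    Measure.prod_apply (slicing.measurable hs)]
  rfl

end UnitVector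

section Volume

variable [FiniteDimensional ℝ E] [MeasurableSpace E] [BorelSpace E]

lemma volume_closedBall_eq_ofReal (x : E) {r : ℝ} (hr : 0 ≤ r) :
    volume (closedBall x r) =
      ENNReal.ofReal (r ^ finrank ℝ E * (√π ^ finrank ℝ E / Gamma (finrank ℝ E / 2 + 1))) := by
  cases subsingleton_or_nontrivial E with
  | inl hE =>
    have ball_eq : closedBall x r = parallelepiped (stdOrthonormalBasis ℝ E) :=
      (Subsingleton.eq_univ_of_nonempty ⟨x, mem_closedBall_self hr⟩).trans
        (Subsingleton.eq_univ_of_nonempty ⟨_, mem_image_of_mem _ (left_mem_Icc.2 zero_le_one)⟩).symm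
    simp [ball_eq, (stdOrthonormalBasis ℝ E).volume_parallelepiped, finrank_zero_of_subsingleton]
  | inr hE =>
    rw [InnerProductSpace.volume_closedBall, ENNReal.ofReal_mul (by positivity),
      ENNReal.ofReal_pow hr]

lemma volume_orthogonal_slice_sphericalCap {m : ℕ} (hE : finrank ℝ E = m + 1) {e : E}
    (he : ‖e‖ = 1) {δ τ : ℝ} (hτ : 0 ≤ τ) (hδ : -τ ≤ δ) (t : ℝ) :
    volume {y : (ℝ ∙ e)ᗮ | t • e + (y : E) ∈ sphericalCap e δ τ} =
      (Icc δ τ).indicator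
        (fun t ↦ ENNReal.ofReal (√π ^ m / Gamma (m / 2 + 1) * √(τ ^ 2 - t ^ 2) ^ m)) t := by
  have : Fact (finrank ℝ E = m + 1) := ⟨hE⟩
  have finrank_slice : finrank ℝ (ℝ ∙ e)ᗮ = m :=
    Submodule.finrank_orthogonal_span_singleton (norm_ne_zero_iff.1 (he ▸ one_ne_zero))
  simp only [smul_add_orthogonal_mem_sphericalCap_iff he hτ hδ]
  by_cases ht : t ∈ Icc δ τ
  · have slice_eq : {y : (ℝ ∙ e)ᗮ | t ∈ Icc δ τ ∧ ‖y‖ ≤ √(τ ^ 2 - t ^ 2)} =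
        closedBall 0 √(τ ^ 2 - t ^ 2) := by
      ext; simp [ht.1, ht.2]
    rw [slice_eq, volume_closedBall_eq_ofReal _ (sqrt_nonneg _), finrank_slice,
      indicator_of_mem ht, mul_comm]
  · simp [ht]

lemma volume_sphericalCap_eq_integral {m : ℕ} (hE : finrank ℝ E = m + 1) {e : E} (he : ‖e‖ = 1)
    {δ τ : ℝ} (hτ : 0 ≤ τ) (hδ : -τ ≤ δ) (hδτ : δ ≤ τ) :
    volume (sphericalCap e δ τ) =
      ENNReal.ofReal (√π ^ m / Gamma (m / 2 + 1) * ∫ t in δ..τ, √(τ ^ 2 - t ^ 2) ^ m) := by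
  rw [volume_eq_lintegral_volume_orthogonal_slice he (isClosed_sphericalCap e δ τ).measurableSet]
  simp_rw [volume_orthogonal_slice_sphericalCap hE he hτ hδ]
  rw [lintegral_indicator measurableSet_Icc, ← ofReal_integral_eq_lintegral_ofReal
    (Continuous.integrableOn_Icc (by fun_prop)) (.of_forall fun t ↦ by positivity),
    integral_Icc_eq_integral_Ioc, ← intervalIntegral.integral_of_le hδτ,
    intervalIntegral.integral_const_mul]

theorem volume_spherical_cap_general {e : E} (he : ‖e‖ = 1) {δ τ : ℝ} (hτ : 0 < τ)
    (hδ : -τ ≤ δ) (hδτ : δ ≤ τ) :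
    volume (sphericalCap e δ τ) =
      ENNReal.ofReal
        (π ^ (((finrank ℝ E : ℝ) - 1) / 2) * τ ^ finrank ℝ E /
            Gamma (((finrank ℝ E : ℝ) + 1) / 2) *
          ∫ θ in (0 : ℝ)..arccos (δ / τ), sin θ ^ finrank ℝ E) := by
  have : Nontrivial E := ⟨e, 0, norm_ne_zero_iff.1 (he ▸ one_ne_zero)⟩
  obtain ⟨m, hm⟩ : ∃ m, finrank ℝ E = m + 1 := Nat.exists_eq_add_one.2 finrank_pos
  have sqrt_pi_pow : √π ^ m = π ^ ((m : ℝ) / 2) := by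
    rw [← rpow_natCast, rpow_div_two_eq_sqrt _ pi_nonneg]
  have gamma_arg : ((m : ℝ) + 1 + 1) / 2 = m / 2 + 1 := by ring
  rw [volume_sphericalCap_eq_integral hm he hτ.le hδ hδτ,
    integral_sqrt_sq_sub_sq_pow m hτ hδ hδτ, hm, Nat.cast_add_one, add_sub_cancel_right,
    gamma_arg, sqrt_pi_pow]
  ring_nf

end Volume

end InnerProductSpace

/-- Volume of the spherical cap `{x ∈ ℝⁿ : ‖x‖ ≤ τ, x₀ ≥ δ}`:
`(π^{(n−1)/2}·τⁿ/Γ((n+1)/2)) · ∫₀^{arccos(δ/τ)} sinⁿθ dθ`. -/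
theorem volume_spherical_cap {n : ℕ} (hn : 1 ≤ n) (δ τ : ℝ) (hτ : 0 < τ)
    (hδ : 0 ≤ δ) (hδτ : δ ≤ τ) :
    volume {x : EuclideanSpace ℝ (Fin n) | ‖x‖ ≤ τ ∧ δ ≤ x ⟨0, hn⟩} =
      ENNReal.ofReal
        (Real.pi ^ (((n : ℝ) - 1) / 2) * τ ^ n / Real.Gamma (((n : ℝ) + 1) / 2) *
          ∫ θ in (0:ℝ)..(Real.arccos (δ / τ)), Real.sin θ ^ n) := by
  have axis_norm : ‖EuclideanSpace.single (⟨0, hn⟩ : Fin n) (1 : ℝ)‖ = 1 := by simp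
  simpa [sphericalCap, EuclideanSpace.inner_single_left] using
    volume_spherical_cap_general axis_norm hτ (by linarith) hδτ
end
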